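/- arXiv:2008.13080 — 8 statements merged into one kernel-verified Lean document; each statement's English description precedes it below -/
import Mathlib

section
/- Let {V_k}_{k≥0} and {w_k}_{k≥0} be sequences of nonnegative real numbers (extend w by setting w_k = 0 for all indices k < 0). Let a ∈ (0,1), b ≥ 0, c ≥ 0 and let k₀ ≥ 0 be an integer. Assume that V_{k+1} ≤ a·V_k − b·w_k + c·Σ_{j=k−k₀}^{k} w_j holds for all k ≥ 0, and that (c/(1−a))·(1−a^{k₀+1})/a^{k₀} ≤ b. Then V_k ≤ a^k·V_0 for all k ≥ 0. -/
/-!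
The energy `L k = V k + c * ∑_{i < k₀} p i * w (k - 1 - i)` dominates `V k`, equals `V 0` at
`k = 0`, and satisfies `L (k + 1) ≤ a * L k`. The weights `p i = ∑_{m=1}^{k₀-i} a⁻ᵐ` are chosen so
that `p k₀ = 0` and `1 + p (i + 1) = a * p i`: all delayed terms then cancel in
`L (k + 1) - a * L k`, leaving only `(c * (1 + p 0) - b) * w k`, which is nonpositive because
`c * (1 + p 0)` is exactly the left-hand side of the condition on `b`.
-/

/-- Weight of `w (k - 1 - i)` in the energy: the closed form of `∑_{m=1}^{k₀-i} a⁻ᵐ`,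
meaningful for `i ≤ k₀`. -/
noncomputable def delayWeight (a : ℝ) (k₀ i : ℕ) : ℝ := ((a⁻¹) ^ (k₀ - i) - 1) / (1 - a)

lemma delayWeight_self (a : ℝ) (k₀ : ℕ) : delayWeight a k₀ k₀ = 0 := by
  simp [delayWeight]

lemma delayWeight_nonneg {a : ℝ} (ha0 : 0 < a) (ha1 : a < 1) (k₀ i : ℕ) :
    0 ≤ delayWeight a k₀ i := by
  have h : 1 ≤ (a⁻¹) ^ (k₀ - i) := one_le_pow₀ ((one_le_inv₀ ha0).2 ha1.le)
  exact div_nonneg (by linarith) (by linarith)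

lemma delayWeight_succ {a : ℝ} (ha0 : 0 < a) (ha1 : a < 1) {k₀ i : ℕ} (hi : i < k₀) :
    1 + delayWeight a k₀ (i + 1) = a * delayWeight a k₀ i := by
  obtain ⟨n, rfl⟩ := Nat.exists_eq_add_of_lt hi
  have h1 : i + n + 1 - (i + 1) = n := by omega
  have h2 : i + n + 1 - i = n + 1 := by omega
  have h3 : 1 - a ≠ 0 := by linarith
  have h4 : a * (a⁻¹) ^ (n + 1) = (a⁻¹) ^ n := by
    rw [pow_succ']
    field_simp
  rw [delayWeight, delayWeight, h1, h2, ← mul_div_assoc, mul_sub, h4]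
  field_simp
  ring

lemma mul_one_add_delayWeight_zero {a : ℝ} (ha0 : 0 < a) (ha1 : a < 1) (c : ℝ) (k₀ : ℕ) :
    c * (1 + delayWeight a k₀ 0) = c / (1 - a) * ((1 - a ^ (k₀ + 1)) / a ^ k₀) := by
  have h3 : 1 - a ≠ 0 := by linarith
  rw [delayWeight, Nat.sub_zero, inv_pow, pow_succ]
  field_simp
  ring

lemma sum_Icc_sub_eq_sum_range (w : ℤ → ℝ) (k : ℤ) (n : ℕ) :
    ∑ j ∈ Finset.Icc (k - n) k, w j = ∑ i ∈ Finset.range (n + 1), w (k - i) := by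
  symm
  refine Finset.sum_bij (fun i _ => k - (i : ℤ)) ?_ ?_ ?_ ?_
  · intro i hi
    simp only [Finset.mem_range] at hi
    simp only [Finset.mem_Icc]
    omega
  · intro i _ j _ h
    omega
  · intro j hj
    simp only [Finset.mem_Icc] at hj
    exact ⟨(k - j).toNat, by simp only [Finset.mem_range]; omega, by omega⟩
  · intro i _
    rfl

/-- The window sum plus the shifted weighted sum is `a` times the weighted sum, up to the
newest term `w k`. -/
lemma sum_window_add_weighted {a : ℝ} (ha0 : 0 < a) (ha1 : a < 1) (k₀ : ℕ) (w : ℤ → ℝ) (k : ℤ) :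
    ∑ i ∈ Finset.range (k₀ + 1), w (k - i)
        + ∑ i ∈ Finset.range k₀, delayWeight a k₀ i * w (k - i)
      = (1 + delayWeight a k₀ 0) * w k
        + a * ∑ i ∈ Finset.range k₀, delayWeight a k₀ i * w (k - 1 - i) := by
  -- The term `i = k₀` may be added to the weighted sum since its weight vanishes.
  have h1 : ∑ i ∈ Finset.range k₀, delayWeight a k₀ i * w (k - i)
      = ∑ i ∈ Finset.range (k₀ + 1), delayWeight a k₀ i * w (k - i) := by
    rw [Finset.sum_range_succ, delayWeight_self, zero_mul, add_zero]
  rw [h1, ← Finset.sum_add_distrib, Finset.sum_range_succ', Finset.mul_sum, add_comm]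
  congr 1
  · simp only [Nat.cast_zero, sub_zero]
    ring
  · refine Finset.sum_congr rfl fun i hi => ?_
    have h2 : k - ((i + 1 : ℕ) : ℤ) = k - 1 - i := by push_cast; ring
    rw [h2, ← mul_assoc, ← delayWeight_succ ha0 ha1 (Finset.mem_range.1 hi)]
    ring

/-- Tail vanishing lemma: if nonnegative sequences `V` (indexed by `ℕ`) and `w` (indexed by
`ℤ`, vanishing for negative indices) satisfy the recursion
`V (k+1) ≤ a * V k - b * w k + c * ∑_{j=k-k₀}^{k} w j` with `a ∈ (0,1)`, `b, c ≥ 0`, and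
`(c/(1-a)) * (1 - a^(k₀+1))/a^k₀ ≤ b`, then `V k ≤ a^k * V 0` for all `k`. -/
theorem tail_vanishing_lemma
    (V : ℕ → ℝ) (w : ℤ → ℝ) (a b c : ℝ) (k₀ : ℕ)
    (hV : ∀ k, 0 ≤ V k) (hw : ∀ k, 0 ≤ w k)
    (hwneg : ∀ k : ℤ, k < 0 → w k = 0)
    (ha0 : 0 < a) (ha1 : a < 1) (hb : 0 ≤ b) (hc : 0 ≤ c)
    (hrec : ∀ k : ℕ,
      V (k + 1) ≤ a * V k - b * w k + c * ∑ j ∈ Finset.Icc ((k : ℤ) - k₀) (k : ℤ), w j)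
    (hcond : c / (1 - a) * ((1 - a ^ (k₀ + 1)) / a ^ k₀) ≤ b) :
    ∀ k : ℕ, V k ≤ a ^ k * V 0 := by
  have key : ∀ k : ℕ,
      V k + c * ∑ i ∈ Finset.range k₀, delayWeight a k₀ i * w ((k : ℤ) - 1 - i)
        ≤ a ^ k * V 0 := by
    intro k
    induction k with
    | zero =>
      have h0 : ∑ i ∈ Finset.range k₀, delayWeight a k₀ i * w (((0 : ℕ) : ℤ) - 1 - i) = 0 :=
        Finset.sum_eq_zero fun i _ => by rw [hwneg _ (by omega), mul_zero]
      rw [h0]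
      simp
    | succ k ih =>
      have hs := sum_window_add_weighted ha0 ha1 k₀ w (k : ℤ)
      have hr := hrec k
      rw [sum_Icc_sub_eq_sum_range] at hr
      have hk : ((k + 1 : ℕ) : ℤ) - 1 = k := by push_cast; ring
      rw [hk, pow_succ']
      have hb' := mul_le_mul_of_nonneg_right hcond (hw k)
      rw [← mul_one_add_delayWeight_zero ha0 ha1] at hb'
      have hcs := congrArg (c * ·) hs
      simp only [mul_add] at hcs
      have ha := mul_le_mul_of_nonneg_left ih ha0.le
      linarith
  intro k
  have hnn : 0 ≤ c * ∑ i ∈ Finset.range k₀, delayWeight a k₀ i * w ((k : ℤ) - 1 - i) :=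
    mul_nonneg hc (Finset.sum_nonneg fun i _ =>
      mul_nonneg (delayWeight_nonneg ha0 ha1 k₀ i) (hw _))
  linarith [key k]
end

section
/- Let E and F be real normed vector spaces, let S be a set-valued map from E to F (i.e., S : E → Set F), let x̄ ∈ F and let δ > 0, κ > 0. Write S⁻¹(x) := {u ∈ E : x ∈ S(u)}. Assume that for every x ∈ F with ‖x − x̄‖ ≤ δ and every y ∈ E with x ∈ S(y), the infimal distance from y to S⁻¹(x̄) satisfies infDist(y, S⁻¹(x̄)) ≤ κ·‖x − x̄‖. Then for every y ∈ E such that S(y) is nonempty and infDist(x̄, S(y)) < δ, one has infDist(y, S⁻¹(x̄)) ≤ κ·infDist(x̄, S(y)). -/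
/-- If the inverse of a set-valued map `S : E → Set F` is upper Lipschitz at `x̄` in the sense
that `infDist y (S⁻¹ x̄) ≤ κ * ‖x - x̄‖` whenever `‖x - x̄‖ ≤ δ` and `x ∈ S y`, then for every
`y` with `S y` nonempty and `infDist x̄ (S y) < δ` one has
`infDist y (S⁻¹ x̄) ≤ κ * infDist x̄ (S y)`. -/
theorem metric_subregularity_of_upper_lipschitz_inverse
    {E F : Type*} [NormedAddCommGroup E] [NormedSpace ℝ E]
    [NormedAddCommGroup F] [NormedSpace ℝ F]
    (S : E → Set F) (xbar : F) (δ κ : ℝ) (hδ : 0 < δ) (hκ : 0 < κ)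
    (hUL : ∀ x : F, ∀ y : E, ‖x - xbar‖ ≤ δ → x ∈ S y →
      Metric.infDist y {u : E | xbar ∈ S u} ≤ κ * ‖x - xbar‖) :
    ∀ y : E, (S y).Nonempty → Metric.infDist xbar (S y) < δ →
      Metric.infDist y {u : E | xbar ∈ S u} ≤ κ * Metric.infDist xbar (S y) := by
  intro y hne hlt
  by_contra! hcon
  -- Some `x ∈ S y` is within `δ` of `xbar` and so close that `κ * ‖x - xbar‖` is below
  -- `infDist y (S⁻¹ xbar)`, against the upper Lipschitz bound at `x`.
  obtain ⟨x, hx, hd⟩ := (Metric.infDist_lt_iff hne).1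
    (lt_min hlt ((lt_div_iff₀' hκ).2 hcon))
  rw [dist_comm, dist_eq_norm, lt_min_iff, lt_div_iff₀' hκ] at hd
  exact (hUL x y hd.1.le hx).not_gt hd.2
end

section
/- Let J be a nonempty finite index set with m = |J|, and for each j ∈ J let F_j be a real inner product space; equip the product E = Π_{j∈J} F_j with the inner product ⟨y, z⟩ = Σ_{j∈J} ⟨y_j, z_j⟩ (so ‖y‖² = Σ_j ‖y_j‖²). For y, ỹ ∈ E and j ∈ J, let update_j(y, ỹ) be the point of E whose j-th coordinate is ỹ_j and whose other coordinates agree with y. Let h : E → ℝ be convex and Fréchet differentiable with gradient ∇h. Then for all y, ỹ ∈ E and all ℓ ≥ 0 such that ∇h is Lipschitz with constant ℓ: (1/m)·Σ_{j∈J} h(update_j(y, ỹ)) ≤ h(y) + (1/m)·⟨∇h(y), ỹ − y⟩ + (ℓ/(2m))·‖ỹ − y‖². -/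
/-!
Every single-coordinate update is the step `y + d_j`, where `d_j` is the `j`-th component of
`yt - y` placed in the `j`-th slot. The descent lemma for functions with Lipschitz gradient
(`descent_of_lipschitz_gradient`) bounds `h (y + d_j)` by
`h y + ⟪h' y, d_j⟫ + ℓ / 2 * ‖d_j‖ ^ 2`. Summing over `j` gives the claim, because the `d_j` sum to
`yt - y` and, by orthogonality, their squared norms sum to `‖yt - y‖ ^ 2`.
-/

open scoped RealInnerProductSpace in
/-- The descent lemma: a function with `ℓ`-Lipschitz gradient lies below its quadratic upper model.
Along the segment from `y` to `y + d`, the derivative of the model dominates that of `h`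
by Cauchy–Schwarz, so no integration (hence no completeness of the space) is needed. -/
theorem descent_of_lipschitz_gradient
    {E : Type*} [NormedAddCommGroup E] [InnerProductSpace ℝ E] (h : E → ℝ) (h' : E → E)
    (hdiff : ∀ y : E, HasFDerivAt h ((innerSL ℝ) (h' y)) y) (ℓ : ℝ)
    (hlip : ∀ u w : E, ‖h' u - h' w‖ ≤ ℓ * ‖u - w‖) (y d : E) :
    h (y + d) ≤ h y + ⟪h' y, d⟫ + ℓ / 2 * ‖d‖ ^ 2 := by
  have hg : ∀ t : ℝ, HasDerivAt (fun t : ℝ => h (y + t • d)) ⟪h' (y + t • d), d⟫ t := by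
    intro t
    have hline : HasDerivAt (fun t : ℝ => y + t • d) d t := by
      simpa using ((hasDerivAt_id t).smul_const d).const_add y
    exact (hdiff (y + t • d)).comp_hasDerivAt t hline
  have hB : ∀ t : ℝ, HasDerivAt (fun t : ℝ => h y + t * ⟪h' y, d⟫ + t ^ 2 * (ℓ / 2 * ‖d‖ ^ 2))
      (⟪h' y, d⟫ + t * (ℓ * ‖d‖ ^ 2)) t := by
    intro t
    have h1 := (((hasDerivAt_id t).mul_const ⟪h' y, d⟫).const_add (h y)).add
      (((hasDerivAt_id t).pow 2).mul_const (ℓ / 2 * ‖d‖ ^ 2))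
    refine h1.congr_deriv ?_
    simp
    ring
  have key := image_le_of_deriv_right_le_deriv_boundary (a := 0) (b := 1)
    (fun t _ => (hg t).continuousAt.continuousWithinAt)
    (fun t _ => (hg t).hasDerivWithinAt) (by simp)
    (fun t _ => (hB t).continuousAt.continuousWithinAt)
    (fun t _ => (hB t).hasDerivWithinAt)
    (fun t ht => by
      have hCS := real_inner_le_norm (h' (y + t • d) - h' y) d
      have hL := hlip (y + t • d) y
      rw [add_sub_cancel_left, norm_smul, Real.norm_of_nonneg ht.1] at hL
      rw [inner_sub_left] at hCS
      nlinarith [mul_le_mul_of_nonneg_right hL (norm_nonneg d)])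
    (show (1 : ℝ) ∈ Set.Icc 0 1 by simp)
  simpa using key

open scoped RealInnerProductSpace in
/-- Coordinate-averaged descent inequality: for a convex `h` on the `ℓ²`-product `E = Π_j F_j`,
Fréchet differentiable with gradient `h'` (i.e. with Fréchet derivative `u ↦ ⟪h'(y), u⟫` at
each `y`), averaging over single-coordinate updates gives, whenever `h'` is `ℓ`-Lipschitz,
`(1/m) ∑_j h(update_j(y, yt)) ≤ h(y) + (1/m)⟪h'(y), yt - y⟫ + (ℓ/(2m))‖yt - y‖²`. -/
theorem coordinate_averaged_descent
    {J : Type*} [Fintype J] [Nonempty J] [DecidableEq J]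
    {F : J → Type*} [∀ j, NormedAddCommGroup (F j)] [∀ j, InnerProductSpace ℝ (F j)]
    (h : PiLp 2 F → ℝ) (hconv : ConvexOn ℝ Set.univ h)
    (h' : PiLp 2 F → PiLp 2 F)
    (hdiff : ∀ y : PiLp 2 F, HasFDerivAt h ((innerSL ℝ) (h' y)) y)
    (m : ℕ) (hm : m = Fintype.card J)
    (upd : PiLp 2 F → PiLp 2 F → J → PiLp 2 F)
    (hupd : ∀ y yt : PiLp 2 F, ∀ j : J, upd y yt j = Function.update y j (yt j)) :
    ∀ y yt : PiLp 2 F, ∀ ℓ : ℝ, 0 ≤ ℓ →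
      (∀ u w : PiLp 2 F, ‖h' u - h' w‖ ≤ ℓ * ‖u - w‖) →
      (1 / m) * ∑ j : J, h (upd y yt j) ≤
        h y + (1 / m) * ⟪h' y, yt - y⟫ + ℓ / (2 * m) * ‖yt - y‖ ^ 2 := by
  intro y yt ℓ hℓ hlip
  have hstep : ∀ j, upd y yt j = y + PiLp.single 2 j ((yt - y) j) := by
    intro j
    ext i
    rw [hupd]
    by_cases hij : i = j
    · subst hij
      simp
    · simp [hij]
  have hdescent : ∀ j, h (upd y yt j) ≤
      h y + ⟪h' y j, (yt - y) j⟫ + ℓ / 2 * ‖(yt - y) j‖ ^ 2 := by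
    intro j
    have hj := descent_of_lipschitz_gradient h h' hdiff ℓ hlip y (PiLp.single 2 j ((yt - y) j))
    have hinner : ⟪h' y, PiLp.single 2 j ((yt - y) j)⟫ = ⟪h' y j, (yt - y) j⟫ := by
      rw [PiLp.inner_apply, Finset.sum_eq_single j]
      · simp
      · intro i _ hij
        simp [hij]
      · simp
    rwa [hinner, PiLp.norm_single, ← hstep] at hj
  have hsum := Finset.sum_le_sum fun j (_ : j ∈ Finset.univ) => hdescent j
  rw [Finset.sum_add_distrib, Finset.sum_add_distrib, ← Finset.mul_sum, ← PiLp.inner_apply,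
    ← PiLp.norm_sq_eq_of_L2, Finset.sum_const, Finset.card_univ, ← hm, nsmul_eq_mul] at hsum
  have hm0 : (0 : ℝ) < m := by
    rw [hm]
    exact_mod_cast Fintype.card_pos
  calc (1 / m) * ∑ j : J, h (upd y yt j)
      ≤ (1 / m) * (m * h y + ⟪h' y, yt - y⟫ + ℓ / 2 * ‖yt - y‖ ^ 2) := by gcongr
    _ = h y + (1 / m) * ⟪h' y, yt - y⟫ + ℓ / (2 * m) * ‖yt - y‖ ^ 2 := by field_simp
end

section
/- Let J be a nonempty finite index set with m = |J|, and for each j ∈ J let F_j be a real inner product space; equip the product E = Π_{j∈J} F_j with the inner product ⟨y, z⟩ = Σ_{j∈J} ⟨y_j, z_j⟩ (so ‖y‖² = Σ_j ‖y_j‖²). For y, ỹ ∈ E and j ∈ J, let update_j(y, ỹ) be the point of E whose j-th coordinate is ỹ_j and whose other coordinates agree with y. Let h : E → ℝ be convex and Fréchet differentiable with gradient ∇h Lipschitz with constant ℓ ≥ 0. Then for all y, ỹ ∈ E: (1/m)·Σ_{j∈J} h(update_j(y, ỹ)) ≤ h(ỹ) + ((m−1)/m)·⟨∇h(ỹ),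 y − ỹ⟩ + ((m−1)·ℓ/(2m))·‖y − ỹ‖². -/
/-!
By the descent lemma, a function with `ℓ`-Lipschitz gradient lies below its quadratic expansion
at `yt`. This is applied at each of the `m` partial updates. The displacement `upd y yt j - yt` is
`y - yt` with its `j`-th coordinate replaced by `0`, so when summing over `j` each coordinate of
`y - yt` is counted exactly `m - 1` times, both in the linear term and in the squared norm.
-/

open scoped RealInnerProductSpace in
/-- The descent lemma. Along the segment from `a` to `x`, the difference between `h` and its
quadratic upper model has nonpositive derivative, hence is antitone. -/
theorem descent_lemma {E : Type*} [NormedAddCommGroup E] [InnerProductSpace ℝ E]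
    (h : E → ℝ) (h' : E → E) (hdiff : ∀ y, HasFDerivAt h ((innerSL ℝ) (h' y)) y)
    (ℓ : ℝ) (hLip : ∀ u w, ‖h' u - h' w‖ ≤ ℓ * ‖u - w‖) (a x : E) :
    h x ≤ h a + ⟪h' a, x - a⟫ + ℓ / 2 * ‖x - a‖ ^ 2 := by
  obtain ⟨d, rfl⟩ : ∃ d, x = a + d := ⟨x - a, by abel⟩
  rw [add_sub_cancel_left]
  let g : ℝ → ℝ := fun t => h (a + t • d) - t * ⟪h' a, d⟫ - ℓ / 2 * ‖d‖ ^ 2 * t ^ 2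
  have hg : ∀ t, HasDerivAt g (⟪h' (a + t • d), d⟫ - ⟪h' a, d⟫ - ℓ * ‖d‖ ^ 2 * t) t := by
    intro t
    have h1 : HasDerivAt (fun t : ℝ => a + t • d) d t := by
      simpa using ((hasDerivAt_id t).smul_const d).const_add a
    have h2 : HasDerivAt (fun t : ℝ => h (a + t • d)) ⟪h' (a + t • d), d⟫ t := by
      have h5 := HasFDerivAt.comp_hasDerivAt (l := h) t (hdiff (a + t • d)) h1
      rwa [innerSL_apply_apply] at h5
    have h3 := (hasDerivAt_id t).mul_const ⟪h' a, d⟫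
    have h4 := (hasDerivAt_pow 2 t).const_mul (ℓ / 2 * ‖d‖ ^ 2)
    refine ((h2.sub h3).sub h4).congr_deriv ?_
    norm_num
    ring
  have hanti : AntitoneOn g (Set.Icc 0 1) := by
    refine antitoneOn_of_deriv_nonpos (convex_Icc 0 1)
      (fun t _ => (hg t).continuousAt.continuousWithinAt)
      (fun t _ => (hg t).differentiableAt.differentiableWithinAt) fun t ht => ?_
    rw [interior_Icc] at ht
    rw [(hg t).deriv, ← inner_sub_left]
    have h1 := real_inner_le_norm (h' (a + t • d) - h' a) d
    have h2 := hLip (a + t • d) a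
    rw [add_sub_cancel_left, norm_smul, Real.norm_of_nonneg ht.1.le] at h2
    have h3 := mul_le_mul_of_nonneg_right h2 (norm_nonneg d)
    linarith
  have h01 := hanti (Set.left_mem_Icc.2 zero_le_one) (Set.right_mem_Icc.2 zero_le_one) zero_le_one
  simp only [g, one_smul, zero_smul, add_zero] at h01
  linarith

theorem sum_sum_offdiag {J : Type*} [Fintype J] [DecidableEq J] (f : J → ℝ) :
    ∑ j, ∑ i, (if i = j then 0 else f i) = ((Fintype.card J : ℝ) - 1) * ∑ i, f i := by
  have key : ∀ j, ∑ i, (if i = j then 0 else f i) = ∑ i, f i - f j := by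
    intro j
    rw [eq_sub_iff_add_eq, ← Finset.sum_erase_add _ _ (Finset.mem_univ j),
      ← Finset.sum_erase_add Finset.univ f (Finset.mem_univ j)]
    simp only [if_true, add_zero]
    congr 1
    exact Finset.sum_congr rfl fun i hi => if_neg (Finset.ne_of_mem_erase hi)
  simp only [key, Finset.sum_sub_distrib, Finset.sum_const, Finset.card_univ, nsmul_eq_mul]
  ring

open scoped RealInnerProductSpace in
/-- Reversed coordinate-averaged descent inequality: for a convex `h` on the `ℓ²`-product
`E = Π_j F_j`, Fréchet differentiable with `ℓ`-Lipschitz gradient `h'`, expanding around the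
full update `yt` gives
`(1/m) ∑_j h(update_j(y, yt)) ≤ h(yt) + ((m-1)/m)⟪h'(yt), y - yt⟫ + ((m-1)ℓ/(2m))‖y - yt‖²`. -/
theorem reversed_coordinate_averaged_descent
    {J : Type*} [Fintype J] [Nonempty J] [DecidableEq J]
    {F : J → Type*} [∀ j, NormedAddCommGroup (F j)] [∀ j, InnerProductSpace ℝ (F j)]
    (h : PiLp 2 F → ℝ) (hconv : ConvexOn ℝ Set.univ h)
    (h' : PiLp 2 F → PiLp 2 F)
    (hdiff : ∀ y : PiLp 2 F, HasFDerivAt h ((innerSL ℝ) (h' y)) y)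
    (ℓ : ℝ) (hℓ : 0 ≤ ℓ)
    (hLip : ∀ u w : PiLp 2 F, ‖h' u - h' w‖ ≤ ℓ * ‖u - w‖)
    (m : ℕ) (hm : m = Fintype.card J)
    (upd : PiLp 2 F → PiLp 2 F → J → PiLp 2 F)
    (hupd : ∀ y yt : PiLp 2 F, ∀ j : J, upd y yt j = Function.update y j (yt j)) :
    ∀ y yt : PiLp 2 F,
      (1 / m) * ∑ j : J, h (upd y yt j) ≤
        h yt + ((m - 1) / m) * ⟪h' yt, y - yt⟫ + (m - 1) * ℓ / (2 * m) * ‖y - yt‖ ^ 2 := by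
  intro y yt
  have hcoord : ∀ j i, (upd y yt j - yt) i = if i = j then 0 else (y - yt) i := by
    intro j i
    have := congrFun (hupd y yt j) i
    rw [PiLp.sub_apply, this]
    by_cases hij : i = j
    · subst hij
      simp
    · simp [hij]
  have hlin : ∑ j, ⟪h' yt, upd y yt j - yt⟫ = ((m : ℝ) - 1) * ⟪h' yt, y - yt⟫ := by
    rw [hm, PiLp.inner_apply, ← sum_sum_offdiag]
    refine Finset.sum_congr rfl fun j _ => ?_
    rw [PiLp.inner_apply]
    refine Finset.sum_congr rfl fun i _ => ?_
    rw [hcoord]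
    split_ifs <;> simp
  have hsq : ∑ j, ‖upd y yt j - yt‖ ^ 2 = ((m : ℝ) - 1) * ‖y - yt‖ ^ 2 := by
    rw [hm, PiLp.norm_sq_eq_of_L2, ← sum_sum_offdiag]
    refine Finset.sum_congr rfl fun j _ => ?_
    rw [PiLp.norm_sq_eq_of_L2]
    refine Finset.sum_congr rfl fun i _ => ?_
    rw [hcoord]
    split_ifs <;> simp
  have hsum : ∑ j, h (upd y yt j) ≤ m * h yt + ((m : ℝ) - 1) * ⟪h' yt, y - yt⟫
      + ℓ / 2 * (((m : ℝ) - 1) * ‖y - yt‖ ^ 2) := by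
    refine (Finset.sum_le_sum fun j _ =>
      descent_lemma h h' hdiff ℓ hLip yt (upd y yt j)).trans_eq ?_
    rw [Finset.sum_add_distrib, Finset.sum_add_distrib, ← Finset.mul_sum, hlin, hsq]
    simp [hm]
  have hmpos : (0 : ℝ) < m := by
    rw [hm]
    exact_mod_cast Fintype.card_pos
  refine (mul_le_mul_of_nonneg_left hsum (by positivity)).trans_eq ?_
  field_simp
end

section
/- Let J be a nonempty finite index set with m = |J|, and for each j ∈ J let F_j be a real inner product space; equip the product E = Π_{j∈J} F_j with the inner product ⟨y, z⟩ = Σ_{j∈J} ⟨y_j, z_j⟩ (so ‖y‖² = Σ_j ‖y_j‖²). For y, ỹ ∈ E and j ∈ J, let update_j(y, ỹ) be the point of E whose j-th coordinate is ỹ_j and whose other coordinates agree with y. Let h : E → ℝ be convex and Fréchet differentiable with gradient ∇h Lipschitz with constant ℓ ≥ 0. Then for all y, ỹ ∈ E: (1/m)·Σ_{j∈J} h(update_j(y, ỹ)) ≤ ((m−1)/m)·h(y) + (1/m)·h(ỹ) + ((m−1)·ℓ/m²)·‖y − ỹ‖². -/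
/-!
Put `d = yt - y` and let `d_j` be its part supported on coordinate `j`. The quadratic upper bound
for functions with Lipschitz gradient (`quadratic_upper_bound`), applied at `y` to the steps `d_j`
and at `yt` to the steps `d_j - d`, bounds `∑ j, h (upd y yt j)` in two ways:
* by `m h(y) + ⟪h' y, d⟫ + ℓ/2 ‖d‖²`, and
* by `m h(yt) - (m - 1) ⟪h' yt, d⟫ + (m - 1) ℓ/2 ‖d‖²`.
Weighting these by `(m - 1) / m²` and `1 / m²`, the gradient terms add up to
`(m - 1) / m² * ⟪h' y - h' yt, d⟫`, which is nonpositive because the gradient of a convex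
function is monotone (`inner_gradient_le_of_convex`).
-/

section Gradient

variable {E : Type*} [NormedAddCommGroup E] [InnerProductSpace ℝ E] {h : E → ℝ} {h' : E → E}

lemma hasDerivAt_along_line (hdiff : ∀ y, HasFDerivAt h ((innerSL ℝ) (h' y)) y) (x v : E) (t : ℝ) :
    HasDerivAt (fun s : ℝ => h (x + s • v)) (inner ℝ (h' (x + t • v)) v) t := by
  have hline : HasDerivAt (fun s : ℝ => x + s • v) v t := by
    simpa using ((hasDerivAt_id t).smul_const v).const_add x
  exact (hdiff (x + t • v)).comp_hasDerivAt t hline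

lemma quadratic_upper_bound (hdiff : ∀ y, HasFDerivAt h ((innerSL ℝ) (h' y)) y) {ℓ : ℝ}
    (hLip : ∀ u w, ‖h' u - h' w‖ ≤ ℓ * ‖u - w‖) (x v : E) :
    h (x + v) ≤ h x + inner ℝ (h' x) v + ℓ / 2 * ‖v‖ ^ 2 := by
  -- The gap between `h` and its upper model along the segment has nonpositive derivative.
  have hd : ∀ t : ℝ, HasDerivAt
      (fun s : ℝ => h (x + s • v) - s * inner ℝ (h' x) v - s ^ 2 * (ℓ / 2 * ‖v‖ ^ 2))
      (inner ℝ (h' (x + t • v)) v - inner ℝ (h' x) v - 2 * t * (ℓ / 2 * ‖v‖ ^ 2)) t := by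
    intro t
    have h1 := (hasDerivAt_id t).mul_const (inner ℝ (h' x) v)
    have h2 := (hasDerivAt_pow 2 t).mul_const (ℓ / 2 * ‖v‖ ^ 2)
    refine (((hasDerivAt_along_line hdiff x v t).sub h1).sub h2).congr_deriv ?_
    simp
  have hanti := antitoneOn_of_deriv_nonpos (convex_Icc (0 : ℝ) 1)
    (fun t _ => (hd t).continuousAt.continuousWithinAt)
    (fun t _ => (hd t).differentiableAt.differentiableWithinAt)
    (fun t ht => by
      rw [interior_Icc] at ht
      rw [(hd t).deriv]
      have hb : inner ℝ (h' (x + t • v) - h' x) v ≤ (ℓ * (t * ‖v‖)) * ‖v‖ := by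
        refine (real_inner_le_norm _ _).trans ?_
        gcongr
        simpa [norm_smul, abs_of_pos ht.1] using hLip (x + t • v) x
      rw [inner_sub_left] at hb
      nlinarith)
  have := hanti (Set.left_mem_Icc.2 zero_le_one) (Set.right_mem_Icc.2 zero_le_one) zero_le_one
  simp at this
  linarith

lemma inner_gradient_le_of_convex (hconv : ConvexOn ℝ Set.univ h)
    (hdiff : ∀ y, HasFDerivAt h ((innerSL ℝ) (h' y)) y) (x v : E) :
    inner ℝ (h' x) v ≤ inner ℝ (h' (x + v)) v := by
  have hc : ConvexOn ℝ Set.univ (fun s : ℝ => h (x + s • v)) := by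
    refine ⟨convex_univ, fun s _ t _ a b ha hb hab => ?_⟩
    have := hconv.2 (Set.mem_univ (x + s • v)) (Set.mem_univ (x + t • v)) ha hb hab
    have he : a • (x + s • v) + b • (x + t • v) = x + (a • s + b • t) • v := by
      obtain rfl : b = 1 - a := by linarith
      module
    rwa [he] at this
  have h0 := hc.le_slope_of_hasDerivAt (Set.mem_univ 0) (Set.mem_univ 1) zero_lt_one
    (hasDerivAt_along_line hdiff x v 0)
  have h1 := hc.slope_le_of_hasDerivAt (Set.mem_univ 0) (Set.mem_univ 1) zero_lt_one
    (hasDerivAt_along_line hdiff x v 1)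
  simpa using h0.trans h1

end Gradient

/-- Combined coordinate-averaged descent inequality: for a convex `h` on the `ℓ²`-product
`E = Π_j F_j`, Fréchet differentiable with `ℓ`-Lipschitz gradient `h'`,
`(1/m) ∑_j h(update_j(y, yt)) ≤ ((m-1)/m) h(y) + (1/m) h(yt) + ((m-1)ℓ/m²)‖y - yt‖²`. -/
theorem combined_coordinate_averaged_descent
    {J : Type*} [Fintype J] [Nonempty J] [DecidableEq J]
    {F : J → Type*} [∀ j, NormedAddCommGroup (F j)] [∀ j, InnerProductSpace ℝ (F j)]
    (h : PiLp 2 F → ℝ) (hconv : ConvexOn ℝ Set.univ h)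
    (h' : PiLp 2 F → PiLp 2 F)
    (hdiff : ∀ y : PiLp 2 F, HasFDerivAt h ((innerSL ℝ) (h' y)) y)
    (ℓ : ℝ) (hℓ : 0 ≤ ℓ)
    (hLip : ∀ u w : PiLp 2 F, ‖h' u - h' w‖ ≤ ℓ * ‖u - w‖)
    (m : ℕ) (hm : m = Fintype.card J)
    (upd : PiLp 2 F → PiLp 2 F → J → PiLp 2 F)
    (hupd : ∀ y yt : PiLp 2 F, ∀ j : J, upd y yt j = Function.update y j (yt j)) :
    ∀ y yt : PiLp 2 F,
      (1 / m) * ∑ j : J, h (upd y yt j) ≤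
        ((m - 1) / m) * h y + (1 / m) * h yt + (m - 1) * ℓ / m ^ 2 * ‖y - yt‖ ^ 2 := by
  intro y yt
  have hm1 : (1 : ℝ) ≤ m := by
    rw [hm]; exact_mod_cast Fintype.card_pos
  set d := yt - y with hd
  let e : J → PiLp 2 F := fun j => WithLp.toLp 2 (Pi.single j (d j))
  have hsum : ∑ j, e j = d := by
    ext i
    simp [e, WithLp.ofLp_sum, Finset.sum_apply, Finset.sum_pi_single]
  have hupd1 : ∀ j, upd y yt j = y + e j := by
    intro j
    ext i
    rw [hupd]
    by_cases hij : i = j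
    · subst hij; simp [e, hd]
    · simp [e, hij]
  have hinner : ∀ j, inner ℝ d (e j) = ‖e j‖ ^ 2 := by
    intro j
    rw [← real_inner_self_eq_norm_sq, PiLp.inner_apply, PiLp.inner_apply]
    refine Finset.sum_congr rfl fun i _ => ?_
    by_cases hij : i = j
    · subst hij; simp [e]
    · simp [e, hij]
  have hnorm : ∑ j, ‖e j‖ ^ 2 = ‖d‖ ^ 2 := by
    simp_rw [← hinner]
    rw [← inner_sum, hsum, real_inner_self_eq_norm_sq]
  have hA : ∑ j, h (upd y yt j) ≤ m * h y + inner ℝ (h' y) d + ℓ / 2 * ‖d‖ ^ 2 := by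
    calc ∑ j, h (upd y yt j)
        ≤ ∑ j, (h y + inner ℝ (h' y) (e j) + ℓ / 2 * ‖e j‖ ^ 2) :=
          Finset.sum_le_sum fun j _ => by
            rw [hupd1]; exact quadratic_upper_bound hdiff hLip y (e j)
      _ = _ := by
          rw [Finset.sum_add_distrib, Finset.sum_add_distrib, ← Finset.mul_sum, hnorm,
            ← inner_sum, hsum, hm]
          simp
  have hB : ∑ j, h (upd y yt j) ≤
      m * h yt - (m - 1) * inner ℝ (h' yt) d + (m - 1) * (ℓ / 2 * ‖d‖ ^ 2) := by
    calc ∑ j, h (upd y yt j)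
        ≤ ∑ j, (h yt + (inner ℝ (h' yt) (e j) - inner ℝ (h' yt) d)
            + (ℓ / 2 * ‖d‖ ^ 2 - ℓ / 2 * ‖e j‖ ^ 2)) :=
          Finset.sum_le_sum fun j _ => by
            have hq := quadratic_upper_bound hdiff hLip yt (e j - d)
            have he : yt + (e j - d) = upd y yt j := by rw [hupd1, hd]; abel
            -- `e j` and `d - e j` are orthogonal
            have hn : ‖e j - d‖ ^ 2 = ‖d‖ ^ 2 - ‖e j‖ ^ 2 := by
              rw [norm_sub_sq_real, real_inner_comm, hinner]; ring
            rw [he, hn, inner_sub_right] at hq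
            linarith
      _ = _ := by
          rw [Finset.sum_add_distrib, Finset.sum_add_distrib, Finset.sum_sub_distrib,
            Finset.sum_sub_distrib, ← Finset.mul_sum, ← Finset.mul_sum, hnorm, ← inner_sum, hsum, hm]
          simp
          ring
  have hmono : inner ℝ (h' y) d ≤ inner ℝ (h' yt) d := by
    simpa [hd] using inner_gradient_le_of_convex hconv hdiff y d
  rw [norm_sub_rev y yt, ← hd]
  have hm0 : (0 : ℝ) < m := by linarith
  have hA' := mul_le_mul_of_nonneg_left hA (sub_nonneg.2 hm1)
  have hmono' := mul_le_mul_of_nonneg_left hmono (sub_nonneg.2 hm1)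
  have key : m * ∑ j, h (upd y yt j) ≤
      m * (m - 1) * h y + m * h yt + (m - 1) * ℓ * ‖d‖ ^ 2 := by
    linarith
  calc (1 / m) * ∑ j, h (upd y yt j) = (m * ∑ j, h (upd y yt j)) / (m : ℝ) ^ 2 := by
        field_simp
    _ ≤ (m * (m - 1) * h y + m * h yt + (m - 1) * ℓ * ‖d‖ ^ 2) / (m : ℝ) ^ 2 := by gcongr
    _ = _ := by field_simp
end

section
/- Let J be a nonempty finite index set, and for each j ∈ J let F_j be a real inner product space; equip the product E = Π_{j∈J} F_j with the inner product ⟨y, z⟩ = Σ_{j∈J} ⟨y_j, z_j⟩ (so ‖y‖² = Σ_j ‖y_j‖²). Let I be a nonempty finite index set and for each i ∈ I let h_i : E → ℝ be convex and Fréchet differentiable with ∇h_i Lipschitz with constant ℓ_i ≥ 0; set ℓ_max = max_{i∈I} ℓ_i. For each j ∈ J let g_j : F_j → ℝ be convex. Define D(y) = Σ_{i∈I} h_i(y) + Σ_{j∈J} g_j(y_j). Let τ, k be natural numbers with τ ≤ k, let y : ℕ → E be a sequence, for each i ∈ I let d_i be a natural number with d_i ≤ τ, let α > 0, and set η₂ =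 ℓ_max·|I|·(τ+1)/2 and v = Σ_{i∈I} ∇h_i(y(k − d_i)). Suppose ỹ ∈ E minimizes over E the function u ↦ ⟨v, u − y(k)⟩ + (1/(2α))·‖u − y(k)‖² + Σ_{j∈J} g_j(u_j). Then for every z ∈ E: D(ỹ) ≤ D(z) + (1/(2α))·‖z − y(k)‖² − (1/(2α))·‖z − ỹ‖² − (1/(2α))·‖ỹ − y(k)‖² + η₂·( ‖ỹ − y(k)‖² + Σ_{s=k−τ}^{k−1} ‖y(s+1) − y(s)‖² ). -/
/-!
For each `i`, expand `h i` around the delayed point `w = y (k - d i)`: the quadratic upper bound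
coming from the Lipschitz gradient (`quadratic_upper_bound`) at `yt` and the convex lower bound
(`gradient_inequality`) at `z` combine to
`h i yt - h i z ≤ ⟪h' i w, yt - z⟫ + ℓ i / 2 * ‖yt - w‖²`.
The squared distance `‖yt - w‖²` is at most `τ + 1` times the sum of the squared lengths of the
`d i + 1 ≤ τ + 1` steps of the path `w → ⋯ → y k → yt` (`delay_norm_sq_le`), which is where the
factor in `η₂` comes from. Summing over `i` produces the linear term `⟪v, yt - z⟫`.
It is absorbed by the three-point inequality of the proximal step (`prox_three_point`), which is the
strong convexity of the proximal objective evaluated at its minimizer.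
-/

section Helpers

open scoped RealInnerProductSpace

variable {E : Type*} [NormedAddCommGroup E] [InnerProductSpace ℝ E]

lemma hasDerivAt_comp_line {f : E → ℝ} {f' : E → E}
    (hf : ∀ u, HasFDerivAt f (innerSL ℝ (f' u)) u) (w p : E) (t : ℝ) :
    HasDerivAt (fun t : ℝ => f (w + t • p)) ⟪f' (w + t • p), p⟫ t := by
  have h1 : HasDerivAt (fun t : ℝ => w + t • p) p t := by
    simpa using ((hasDerivAt_id t).smul_const p).const_add w
  exact (hf (w + t • p)).comp_hasDerivAt t h1

lemma gradient_inequality {f : E → ℝ} {f' : E → E} (hc : ConvexOn ℝ Set.univ f)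
    (hf : ∀ u, HasFDerivAt f (innerSL ℝ (f' u)) u) (w z : E) :
    f w + ⟪f' w, z - w⟫ ≤ f z := by
  have hcl : ConvexOn ℝ Set.univ (fun t : ℝ => f (w + t • (z - w))) := by
    have := hc.comp_affineMap (AffineMap.lineMap w z : ℝ →ᵃ[ℝ] E)
    rw [Set.preimage_univ] at this
    refine this.congr fun t _ => ?_
    simp [AffineMap.lineMap_apply, add_comm]
  have hs := hcl.le_slope_of_hasDerivAt (Set.mem_univ 0) (Set.mem_univ 1) one_pos
    (hasDerivAt_comp_line hf w (z - w) 0)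
  simp [slope_def_field] at hs
  linarith

/-- The descent lemma for a function with `L`-Lipschitz gradient. -/
lemma quadratic_upper_bound_s9 {f : E → ℝ} {f' : E → E} {L : ℝ}
    (hf : ∀ u, HasFDerivAt f (innerSL ℝ (f' u)) u)
    (hL : ∀ u w, ‖f' u - f' w‖ ≤ L * ‖u - w‖) (w x : E) :
    f x ≤ f w + ⟪f' w, x - w⟫ + L / 2 * ‖x - w‖ ^ 2 := by
  set p := x - w with hp
  have hder : ∀ t : ℝ, HasDerivAt
      (fun t : ℝ => f (w + t • p) - t * ⟪f' w, p⟫ - L / 2 * ‖p‖ ^ 2 * t ^ 2)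
      (⟪f' (w + t • p), p⟫ - ⟪f' w, p⟫ - L * ‖p‖ ^ 2 * t) t := fun t => by
    have h1 := ((hasDerivAt_comp_line hf w p t).sub
      ((hasDerivAt_id t).mul_const ⟪f' w, p⟫)).sub
      (((hasDerivAt_id t).pow 2).const_mul (L / 2 * ‖p‖ ^ 2))
    refine h1.congr_deriv ?_
    simp
    ring
  have hanti := antitoneOn_of_deriv_nonpos (convex_Icc (0 : ℝ) 1)
    (fun t _ => (hder t).continuousAt.continuousWithinAt)
    (fun t _ => (hder t).differentiableAt.differentiableWithinAt)
    (fun t ht => by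
      rw [(hder t).deriv]
      have ht0 : 0 ≤ t := (interior_subset ht).1
      have h1 : ⟪f' (w + t • p) - f' w, p⟫ ≤ L * (t * ‖p‖) * ‖p‖ := by
        refine (real_inner_le_norm _ _).trans ?_
        gcongr
        simpa [norm_smul, abs_of_nonneg ht0] using hL (w + t • p) w
      rw [inner_sub_left] at h1
      linarith)
  have h01 := hanti (Set.left_mem_Icc.2 zero_le_one) (Set.right_mem_Icc.2 zero_le_one) zero_le_one
  have hx : w + p = x := by simp [hp]
  simp [hx] at h01
  linarith

lemma norm_sq_convex_comb (a b : E) (t : ℝ) :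
    ‖a + t • (b - a)‖ ^ 2 = (1 - t) * ‖a‖ ^ 2 + t * ‖b‖ ^ 2 - t * (1 - t) * ‖b - a‖ ^ 2 := by
  simp only [← real_inner_self_eq_norm_sq, inner_add_left, inner_add_right, inner_sub_left,
    inner_sub_right, real_inner_smul_left, real_inner_smul_right, real_inner_comm a b]
  ring

/-- Three-point inequality: the quadratic gap `c * ‖z - x‖ ^ 2` is gained over mere minimality by
comparing the minimizer `x` with `x + t • (z - x)` and letting `t → 0`. -/
lemma prox_three_point {φ : E → ℝ} (hφ : ConvexOn ℝ Set.univ φ) {c : ℝ} {a x : E}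
    (hx : ∀ u, φ x + c * ‖x - a‖ ^ 2 ≤ φ u + c * ‖u - a‖ ^ 2) (z : E) :
    φ x + c * ‖x - a‖ ^ 2 ≤ φ z + c * ‖z - a‖ ^ 2 - c * ‖z - x‖ ^ 2 := by
  have key : ∀ t ∈ Set.Ioo (0 : ℝ) 1,
      φ x + c * ‖x - a‖ ^ 2 ≤ φ z + c * ‖z - a‖ ^ 2 - (1 - t) * (c * ‖z - x‖ ^ 2) := by
    rintro t ⟨ht0, ht1⟩
    have h1 := hx (x + t • (z - x))
    have h2 := hφ.2 (Set.mem_univ x) (Set.mem_univ z) (sub_nonneg.2 ht1.le) ht0.le (by ring)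
    have e1 : (1 - t) • x + t • z = x + t • (z - x) := by module
    have e2 : x + t • (z - x) - a = (x - a) + t • ((z - a) - (x - a)) := by module
    rw [e1] at h2
    rw [e2, norm_sq_convex_comb, sub_sub_sub_cancel_right] at h1
    simp only [smul_eq_mul] at h2
    refine le_of_mul_le_mul_left ?_ ht0
    linarith
  have hlim : Filter.Tendsto
      (fun t : ℝ => φ z + c * ‖z - a‖ ^ 2 - (1 - t) * (c * ‖z - x‖ ^ 2))
      (nhdsWithin 0 (Set.Ioi 0)) (nhds (φ z + c * ‖z - a‖ ^ 2 - (1 - 0) * (c * ‖z - x‖ ^ 2))) :=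
    (Continuous.tendsto (by fun_prop) 0).mono_left nhdsWithin_le_nhds
  have := ge_of_tendsto hlim
    (Filter.mem_of_superset (Ioo_mem_nhdsGT one_pos) key)
  simpa using this

/-- Cauchy–Schwarz along the path `y (k - d), …, y k, x`, which has `d + 1 ≤ τ + 1` steps. -/
lemma delay_norm_sq_le {V : Type*} [NormedAddCommGroup V] (y : ℕ → V) (x : V) {d τ k : ℕ}
    (hd : d ≤ τ) (hτk : τ ≤ k) :
    ‖x - y (k - d)‖ ^ 2 ≤
      (τ + 1) * (‖x - y k‖ ^ 2 + ∑ s ∈ Finset.Ico (k - τ) k, ‖y (s + 1) - y s‖ ^ 2) := by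
  set S := ∑ s ∈ Finset.Ico (k - d) k, ‖y (s + 1) - y s‖ with hS
  set Q := ∑ s ∈ Finset.Ico (k - d) k, ‖y (s + 1) - y s‖ ^ 2 with hQ
  have hQ0 : 0 ≤ Q := Finset.sum_nonneg fun _ _ => by positivity
  have h1 : ‖x - y (k - d)‖ ≤ ‖x - y k‖ + S := by
    have e : x - y (k - d) = (x - y k) + ∑ s ∈ Finset.Ico (k - d) k, (y (s + 1) - y s) := by
      rw [Finset.sum_Ico_sub y (Nat.sub_le k d)]; abel
    rw [e]
    exact (norm_add_le _ _).trans (by gcongr; exact norm_sum_le _ _)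
  have h2 : S ^ 2 ≤ d * Q := by
    have := sq_sum_le_card_mul_sum_sq (s := Finset.Ico (k - d) k)
      (f := fun s => ‖y (s + 1) - y s‖)
    rwa [Nat.card_Ico, Nat.sub_sub_self (hd.trans hτk)] at this
  have h3 : Q ≤ ∑ s ∈ Finset.Ico (k - τ) k, ‖y (s + 1) - y s‖ ^ 2 :=
    Finset.sum_le_sum_of_subset_of_nonneg
      (Finset.Ico_subset_Ico (Nat.sub_le_sub_left hd k) le_rfl) fun _ _ _ => by positivity
  have h4 : (‖x - y k‖ + S) ^ 2 ≤ (d + 1) * (‖x - y k‖ ^ 2 + Q) := by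
    -- Separate `x - y k` from the telescoping part: `2 * r * S ≤ d * r ^ 2 + Q`.
    have h5 : 2 * ‖x - y k‖ * S ≤ d * ‖x - y k‖ ^ 2 + Q := by
      have : 0 ≤ ∑ s ∈ Finset.Ico (k - d) k, (‖x - y k‖ - ‖y (s + 1) - y s‖) ^ 2 :=
        Finset.sum_nonneg fun _ _ => by positivity
      simp only [sub_sq, Finset.sum_add_distrib, Finset.sum_sub_distrib, Finset.sum_const,
        Nat.card_Ico, Nat.sub_sub_self (hd.trans hτk), nsmul_eq_mul, ← Finset.mul_sum] at this
      linarith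
    nlinarith
  calc ‖x - y (k - d)‖ ^ 2 ≤ (‖x - y k‖ + S) ^ 2 := by gcongr
    _ ≤ (d + 1) * (‖x - y k‖ ^ 2 + Q) := h4
    _ ≤ _ := by gcongr

end Helpers

open scoped RealInnerProductSpace in
/-- Core deterministic descent inequality for the proximal incremental aggregated gradient
update with delayed gradients: if `yt` minimizes
`u ↦ ⟪v, u - y k⟫ + (1/(2α))‖u - y k‖² + ∑_j g_j(u_j)` with
`v = ∑_i ∇h_i(y(k - d_i))`, delays `d_i ≤ τ ≤ k`, then for every `z`,
`D(yt) ≤ D(z) + (1/(2α))‖z - y k‖² - (1/(2α))‖z - yt‖² - (1/(2α))‖yt - y k‖²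
  + η₂ (‖yt - y k‖² + ∑_{s=k-τ}^{k-1} ‖y(s+1) - y(s)‖²)`
where `η₂ = ℓ_max |I| (τ+1)/2`. -/
theorem piag_descent_inequality
    {J : Type*} [Fintype J] [Nonempty J]
    {F : J → Type*} [∀ j, NormedAddCommGroup (F j)] [∀ j, InnerProductSpace ℝ (F j)]
    {I : Type*} [Fintype I] [Nonempty I]
    (h : I → PiLp 2 F → ℝ) (hconv : ∀ i, ConvexOn ℝ Set.univ (h i))
    (h' : I → PiLp 2 F → PiLp 2 F)
    (hdiff : ∀ i, ∀ u : PiLp 2 F, HasFDerivAt (h i) ((innerSL ℝ) (h' i u)) u)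
    (ℓ : I → ℝ) (hℓ : ∀ i, 0 ≤ ℓ i)
    (hLip : ∀ i, ∀ u w : PiLp 2 F, ‖h' i u - h' i w‖ ≤ ℓ i * ‖u - w‖)
    (ℓmax : ℝ) (hℓmax : ℓmax = Finset.univ.sup' Finset.univ_nonempty ℓ)
    (g : ∀ j, F j → ℝ) (hg : ∀ j, ConvexOn ℝ Set.univ (g j))
    (D : PiLp 2 F → ℝ) (hD : ∀ u : PiLp 2 F, D u = ∑ i : I, h i u + ∑ j : J, g j (u j))
    (τ k : ℕ) (hτk : τ ≤ k) (y : ℕ → PiLp 2 F)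
    (d : I → ℕ) (hd : ∀ i, d i ≤ τ)
    (α : ℝ) (hα : 0 < α)
    (η₂ : ℝ) (hη₂ : η₂ = ℓmax * (Fintype.card I) * (τ + 1) / 2)
    (v : PiLp 2 F) (hv : v = ∑ i : I, h' i (y (k - d i)))
    (yt : PiLp 2 F)
    (hmin : ∀ u : PiLp 2 F,
      ⟪v, yt - y k⟫ + 1 / (2 * α) * ‖yt - y k‖ ^ 2 + ∑ j : J, g j (yt j) ≤
      ⟪v, u - y k⟫ + 1 / (2 * α) * ‖u - y k‖ ^ 2 + ∑ j : J, g j (u j)) :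
    ∀ z : PiLp 2 F,
      D yt ≤ D z + 1 / (2 * α) * ‖z - y k‖ ^ 2 - 1 / (2 * α) * ‖z - yt‖ ^ 2
        - 1 / (2 * α) * ‖yt - y k‖ ^ 2
        + η₂ * (‖yt - y k‖ ^ 2 + ∑ s ∈ Finset.Ico (k - τ) k, ‖y (s + 1) - y s‖ ^ 2) := by
  intro z
  have hprox := prox_three_point (φ := fun u : PiLp 2 F => ⟪v, u - y k⟫ + ∑ j : J, g j (u j))
    (c := 1 / (2 * α)) (a := y k) (x := yt)
    (by
      refine ⟨convex_univ, fun a _ b _ s t hs ht hst => ?_⟩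
      have hlin : ⟪v, s • a + t • b - y k⟫ = s * ⟪v, a - y k⟫ + t * ⟪v, b - y k⟫ := by
        have e : s • a + t • b - y k = s • (a - y k) + t • (b - y k) := by
          rw [smul_sub, smul_sub, sub_add_sub_comm, ← add_smul, hst, one_smul]
        rw [e, inner_add_right, real_inner_smul_right, real_inner_smul_right]
      have hgs : ∑ j : J, g j ((s • a + t • b) j) ≤
          s * ∑ j : J, g j (a j) + t * ∑ j : J, g j (b j) := by
        rw [Finset.mul_sum, Finset.mul_sum, ← Finset.sum_add_distrib]
        exact Finset.sum_le_sum fun j _ =>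
          (hg j).2 (Set.mem_univ (a j)) (Set.mem_univ (b j)) hs ht hst
      simp only [smul_eq_mul]
      linarith)
    (fun u => by linarith [hmin u]) z
  set R := ‖yt - y k‖ ^ 2 + ∑ s ∈ Finset.Ico (k - τ) k, ‖y (s + 1) - y s‖ ^ 2 with hR
  have hsmooth : ∀ i, h i yt ≤ h i z + ⟪h' i (y (k - d i)), yt - z⟫ + ℓmax / 2 * ((τ + 1) * R) :=
    fun i => by
      have h1 := quadratic_upper_bound_s9 (hdiff i) (hLip i) (y (k - d i)) yt
      have h2 := gradient_inequality (hconv i) (hdiff i) (y (k - d i)) z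
      have h3 : ℓ i ≤ ℓmax := hℓmax ▸ Finset.le_sup' ℓ (Finset.mem_univ i)
      have h4 : ℓ i / 2 * ‖yt - y (k - d i)‖ ^ 2 ≤ ℓmax / 2 * ((τ + 1) * R) :=
        mul_le_mul (by linarith) (delay_norm_sq_le y yt (hd i) hτk) (by positivity)
          (by linarith [hℓ i])
      have h5 : yt - z = (yt - y (k - d i)) - (z - y (k - d i)) := by abel
      rw [h5, inner_sub_right]
      linarith
  have hsum : ∑ i, h i yt ≤ ∑ i, h i z + ⟪v, yt - z⟫ + η₂ * R := by
    refine (Finset.sum_le_sum fun i _ => hsmooth i).trans_eq ?_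
    rw [Finset.sum_add_distrib, Finset.sum_add_distrib, ← sum_inner, ← hv, hη₂]
    simp
    ring
  have hv' : ⟪v, yt - z⟫ = ⟪v, yt - y k⟫ - ⟪v, z - y k⟫ := by
    rw [← inner_sub_right, sub_sub_sub_cancel_right]
  rw [hD, hD]
  linarith
end

section
/- Let J be a nonempty finite index set with m = |J|, and for each j ∈ J let F_j be a real inner product space; equip the product E = Π_{j∈J} F_j with the inner product ⟨y, z⟩ = Σ_{j∈J} ⟨y_j, z_j⟩ (so ‖y‖² = Σ_j ‖y_j‖²). For y, ỹ ∈ E and j ∈ J, let update_j(y, ỹ) be the point of E whose j-th coordinate is ỹ_j and whose other coordinates agree with y. Let Y ⊆ E be a nonempty set, let y, ỹ ∈ E, and let ȳ ∈ Y satisfy ‖y − ȳ‖ = infDist(y, Y). Then (1/m)·Σ_{j∈J} infDist(update_j(y, ỹ), Y)² ≤ (1/m)·‖ỹ − ȳ‖² + ((m−1)/m)·infDist(y, Y)². -/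
/-!
Since `ȳ ∈ Y`, each `infDist (upd y yt j) Y ^ 2` is at most `‖upd y yt j - ȳ‖ ^ 2`, and changing
only coordinate `j` gives `‖upd y yt j - ȳ‖² = ‖y - ȳ‖² - ‖y_j - ȳ_j‖² + ‖yt_j - ȳ_j‖²`.
Summing over `j` yields `(m - 1) ‖y - ȳ‖² + ‖yt - ȳ‖²`, and `‖y - ȳ‖ = infDist y Y`.
-/

/-- Changing one coordinate of `u` to that of `ut` changes the squared distance to `z` by
the difference of the corresponding coordinate terms. -/
lemma norm_sq_sub_of_update {J : Type*} [Fintype J] [DecidableEq J]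
    {F : J → Type*} [∀ j, NormedAddCommGroup (F j)]
    (u ut w z : PiLp 2 F) (j : J) (hw : ∀ i, w i = Function.update u j (ut j) i) :
    ‖w - z‖ ^ 2 = ‖u - z‖ ^ 2 - ‖u j - z j‖ ^ 2 + ‖ut j - z j‖ ^ 2 := by
  simp only [PiLp.norm_sq_eq_of_L2, PiLp.sub_apply]
  rw [← Finset.add_sum_erase _ _ (Finset.mem_univ j),
    ← Finset.add_sum_erase _ (fun i => ‖u i - z i‖ ^ 2) (Finset.mem_univ j)]
  have h : ∑ i ∈ Finset.univ.erase j, ‖w i - z i‖ ^ 2 =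
      ∑ i ∈ Finset.univ.erase j, ‖u i - z i‖ ^ 2 := by
    refine Finset.sum_congr rfl fun i hi => ?_
    rw [hw i, Function.update_of_ne (Finset.ne_of_mem_erase hi)]
  rw [h, hw j, Function.update_self]
  ring

/-- Averaged distance estimate (inequality (4.8)): if `ȳ` is a nearest point of `Y` to `y`,
then averaging the squared distance to `Y` of the single-coordinate updates gives
`(1/m) ∑_j infDist(update_j(y, yt), Y)² ≤ (1/m)‖yt - ȳ‖² + ((m-1)/m) infDist(y, Y)²`. -/
theorem averaged_distance_estimate
    {J : Type*} [Fintype J] [Nonempty J] [DecidableEq J]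
    {F : J → Type*} [∀ j, NormedAddCommGroup (F j)] [∀ j, InnerProductSpace ℝ (F j)]
    (m : ℕ) (hm : m = Fintype.card J)
    (Y : Set (PiLp 2 F)) (hY : Y.Nonempty)
    (y yt ybar : PiLp 2 F) (hybar : ybar ∈ Y)
    (hproj : ‖y - ybar‖ = Metric.infDist y Y)
    (upd : PiLp 2 F → PiLp 2 F → J → PiLp 2 F)
    (hupd : ∀ u ut : PiLp 2 F, ∀ j : J, upd u ut j = Function.update u j (ut j)) :
    (1 / m) * ∑ j : J, (Metric.infDist (upd y yt j) Y) ^ 2 ≤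
      (1 / m) * ‖yt - ybar‖ ^ 2 + ((m - 1) / m) * (Metric.infDist y Y) ^ 2 := by
  have hsum : ∑ j : J, (Metric.infDist (upd y yt j) Y) ^ 2 ≤
      ‖yt - ybar‖ ^ 2 + ((m : ℝ) - 1) * ‖y - ybar‖ ^ 2 := by
    calc ∑ j : J, (Metric.infDist (upd y yt j) Y) ^ 2
        ≤ ∑ j : J, (‖y - ybar‖ ^ 2 - ‖y j - ybar j‖ ^ 2 + ‖yt j - ybar j‖ ^ 2) := by
          refine Finset.sum_le_sum fun j _ => ?_
          rw [← norm_sq_sub_of_update y yt (upd y yt j) ybar j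
            (fun i => congrFun (hupd y yt j) i), ← dist_eq_norm]
          exact pow_le_pow_left₀ Metric.infDist_nonneg (Metric.infDist_le_dist_of_mem hybar) 2
      _ = ‖yt - ybar‖ ^ 2 + ((m : ℝ) - 1) * ‖y - ybar‖ ^ 2 := by
          have h1 := PiLp.norm_sq_eq_of_L2 F (y - ybar)
          have h2 := PiLp.norm_sq_eq_of_L2 F (yt - ybar)
          simp only [PiLp.sub_apply] at h1 h2
          rw [Finset.sum_add_distrib, Finset.sum_sub_distrib, ← h1, ← h2, Finset.sum_const,
            Finset.card_univ, ← hm, nsmul_eq_mul]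
          ring
  rw [← hproj]
  calc (1 / (m : ℝ)) * ∑ j : J, (Metric.infDist (upd y yt j) Y) ^ 2
      ≤ (1 / (m : ℝ)) * (‖yt - ybar‖ ^ 2 + ((m : ℝ) - 1) * ‖y - ybar‖ ^ 2) :=
        mul_le_mul_of_nonneg_left hsum (by positivity)
    _ = _ := by ring
end

section
/- Let m ≥ 1 be an integer and set β = 1 − 1/m. Let σ > 0, c > 0, let τ be a natural number, and set γ = σ·(1−β)/(8c). Suppose z₀ > 0 satisfies ((1+z)/(1+βz))^τ ≤ 1 + γ/(1+z) for all z with 0 < z ≤ z₀. Let α > 0 satisfy α ≤ min{z₀/σ, 1/(8c)}, and set a = (1 + β·α·σ)/(1 + α·σ) and b = 1/(4α). Then a ∈ (0,1) and (c/(1−a))·(1 − a^{τ+1})/a^{τ} ≤ b. -/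
/-!
Put `z = α * σ`, so that `1 - a = (1 - β) * z / (1 + z)` and `a⁻¹ = (1 + z) / (1 + β * z)`.
Since `(1 - a ^ (τ + 1)) / a ^ τ = a⁻¹ ^ τ - a`, the threshold inequality at `z` bounds it by
`(1 - a) + γ / (1 + z)`. Multiplying by `c / (1 - a)` gives exactly `c + 1 / (8 * α)`, and
`c ≤ 1 / (8 * α)` by the second stepsize restriction.
-/

/-- Verification of the hypothesis of the tail vanishing lemma under the stepsize
restriction: with `β = 1 - 1/m`, `γ = σ(1-β)/(8c)`, a threshold `z₀` for the stepsize
inequality, and `α ≤ min {z₀/σ, 1/(8c)}`, the contraction factor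
`a = (1 + βασ)/(1 + ασ)` lies in `(0,1)` and satisfies
`(c/(1-a)) * (1 - a^(τ+1))/a^τ ≤ b` with `b = 1/(4α)`. -/
theorem stepsize_condition_verification
    (m : ℕ) (hm : 1 ≤ m) (β : ℝ) (hβ : β = 1 - 1 / (m : ℝ))
    (σ c : ℝ) (hσ : 0 < σ) (hc : 0 < c) (τ : ℕ)
    (γ : ℝ) (hγ : γ = σ * (1 - β) / (8 * c))
    (z₀ : ℝ) (hz₀ : 0 < z₀)
    (hthr : ∀ z : ℝ, 0 < z → z ≤ z₀ → ((1 + z) / (1 + β * z)) ^ τ ≤ 1 + γ / (1 + z))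
    (α : ℝ) (hα : 0 < α) (hα₁ : α ≤ min (z₀ / σ) (1 / (8 * c)))
    (a b : ℝ) (ha : a = (1 + β * α * σ) / (1 + α * σ)) (hb : b = 1 / (4 * α)) :
    (0 < a ∧ a < 1) ∧ c / (1 - a) * ((1 - a ^ (τ + 1)) / a ^ τ) ≤ b := by
  obtain ⟨h₁, h₂⟩ := le_min_iff.mp hα₁
  have hm' : (1 : ℝ) ≤ m := by exact_mod_cast hm
  have hmpos : (0 : ℝ) < 1 / (m : ℝ) := by positivity
  have hβ1 : 0 < 1 - β := by rw [hβ]; linarith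
  have hβ0 : 0 ≤ β := by
    have : 1 / (m : ℝ) ≤ 1 := (div_le_one (by linarith)).mpr hm'
    rw [hβ]; linarith
  have hz : 0 < α * σ := mul_pos hα hσ
  have hnum : 0 < 1 + β * α * σ := by positivity
  have hden : 0 < 1 + α * σ := by positivity
  have ha0 : 0 < a := by rw [ha]; positivity
  have hgap : 1 - a = (1 - β) * (α * σ) / (1 + α * σ) := by
    rw [ha]; field_simp; ring
  have hgap0 : 0 < 1 - a := by rw [hgap]; positivity
  refine ⟨⟨ha0, by linarith⟩, ?_⟩
  -- The threshold inequality at `z = α * σ` bounds `1 / a ^ τ`.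
  have hpow : 1 / a ^ τ ≤ 1 + γ / (1 + α * σ) := by
    have h := hthr (α * σ) hz ((le_div_iff₀ hσ).mp h₁)
    have hinv : (1 + α * σ) / (1 + β * (α * σ)) = a⁻¹ := by
      rw [ha, inv_div, mul_assoc]
    rwa [hinv, inv_pow, ← one_div] at h
  have hsplit : (1 - a ^ (τ + 1)) / a ^ τ = 1 / a ^ τ - a := by
    rw [pow_succ]; field_simp
  have hc8 : c ≤ 1 / (8 * α) := by
    rw [le_div_iff₀ (by positivity)] at h₂ ⊢
    linarith
  calc c / (1 - a) * ((1 - a ^ (τ + 1)) / a ^ τ)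
      ≤ c / (1 - a) * ((1 - a) + γ / (1 + α * σ)) := by
        rw [hsplit]
        exact mul_le_mul_of_nonneg_left (by linarith) (by positivity)
    _ = c + c * γ / ((1 - a) * (1 + α * σ)) := by
        field_simp
    _ = c + 1 / (8 * α) := by
        rw [hgap, hγ]; field_simp
    _ ≤ 1 / (8 * α) + 1 / (8 * α) := by linarith
    _ = b := by rw [hb]; field_simp; norm_num
end
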